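/- arXiv:math-ph/0503023 — 2 statements merged into one kernel-verified Lean document; each statement's English description precedes it below -/
import Mathlib

section
/- Integral representation of the corridor term: fix x > 0 and a subset C ⊆ B of bonds, and for t ∈ [0,1] set x_b(t) = x√t for b ∈ C and x_b(t) = x for b ∉ C; let P(t) denote the quenched pressure with parameters {x_b(t)}. Then P(1) − P(0) = |C| (x²/2) (1 + ∫₀¹ [⟨S_C⟩_t]_t dt), where S_C = |C|^{−1} Σ_{b∈C} S_b and the subscript t indicates evaluation at parameters {x_b(t)}. (Note P(1) is the pressure of the full system with all parameters equal to x, and P(0) is the pressure of the system with the corridor bonds removed.) -/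
open MeasureTheory ProbabilityTheory Filter

noncomputable section

/-- The real value ±1 of a Boolean spin. -/
def spin (s : Bool) : ℝ := if s then 1 else -1

/-- The bond spin `S_b = S_n S_{n'}` for a bond `b` with endpoints `ep b = (n, n')`. -/
def bondSpin {V ι : Type*} (ep : ι → V × V) (S : V → Bool) (b : ι) : ℝ :=
  spin (S (ep b).1) * spin (S (ep b).2)

/-- The potential `U(j, S) = Σ_b x_b j_b S_b`. -/
def potential {V ι : Type*} [Fintype ι] (ep : ι → V × V) (x j : ι → ℝ)
    (S : V → Bool) : ℝ :=
  ∑ b, x b * j b * bondSpin ep S b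

/-- The partition function `Z(j) = Σ_S exp U(j,S)`. -/
def partitionFn {V ι : Type*} [Fintype V] [DecidableEq V] [Fintype ι]
    (ep : ι → V × V) (x j : ι → ℝ) : ℝ :=
  ∑ S : V → Bool, Real.exp (potential ep x j S)

/-- The Boltzmann–Gibbs expectation `⟨f⟩` at fixed disorder `j`. -/
def gibbs {V ι : Type*} [Fintype V] [DecidableEq V] [Fintype ι]
    (ep : ι → V × V) (x j : ι → ℝ) (f : (V → Bool) → ℝ) : ℝ :=
  (∑ S : V → Bool, f S * Real.exp (potential ep x j S)) / partitionFn ep x j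

/-- The law of the couplings: independent Gaussians, `j_b` of mean `x_b` and variance 1. -/
def couplings {ι : Type*} [Fintype ι] (x : ι → ℝ) : Measure (ι → ℝ) :=
  Measure.pi fun b => gaussianReal (x b) 1

/-- The quenched average `[F]`. -/
def quenched {ι : Type*} [Fintype ι] (x : ι → ℝ) (F : (ι → ℝ) → ℝ) : ℝ :=
  ∫ j, F j ∂(couplings x)

/-- The quenched pressure `P({x}) = [ln Z]`. -/
def pressure {V ι : Type*} [Fintype V] [DecidableEq V] [Fintype ι]
    (ep : ι → V × V) (x : ι → ℝ) : ℝ :=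
  quenched x fun j => Real.log (partitionFn ep x j)


section aux
set_option linter.unusedSectionVars false
variable {V ι : Type*} [Fintype V] [DecidableEq V] [Fintype ι] [DecidableEq ι]

instance couplings_prob (y : ι → ℝ) : IsProbabilityMeasure (couplings y) := by
  unfold couplings; infer_instance

lemma spin_sq (s : Bool) : spin s * spin s = 1 := by cases s <;> simp [spin]

lemma bondSpin_sq (ep : ι → V × V) (S : V → Bool) (b : ι) :
    bondSpin ep S b * bondSpin ep S b = 1 := by
  unfold bondSpin
  rw [mul_mul_mul_comm, spin_sq, spin_sq, one_mul]

lemma abs_bondSpin (ep : ι → V × V) (S : V → Bool) (b : ι) : |bondSpin ep S b| = 1 := by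
  have h := bondSpin_sq ep S b
  have : |bondSpin ep S b| * |bondSpin ep S b| = 1 := by rw [← abs_mul, h, abs_one]
  nlinarith [abs_nonneg (bondSpin ep S b)]

lemma bondSpin_eq (ep : ι → V × V) (S : V → Bool) (b : ι) :
    bondSpin ep S b = 1 ∨ bondSpin ep S b = -1 := by
  have := abs_bondSpin ep S b
  rcases abs_choice (bondSpin ep S b) with h | h
  · left; linarith
  · right; linarith

lemma spin_beq (s t : Bool) : spin (s == t) = spin s * spin t := by
  cases s <;> cases t <;> simp [spin]

/-- gauge transformation of spins -/
def spinGauge (T : V → Bool) : (V → Bool) ≃ (V → Bool) where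
  toFun S := fun v => S v == T v
  invFun S := fun v => S v == T v
  left_inv S := by
    funext v
    have h : ∀ s t : Bool, ((s == t) == t) = s := by decide
    exact h _ _
  right_inv S := by
    funext v
    have h : ∀ s t : Bool, ((s == t) == t) = s := by decide
    exact h _ _

lemma bondSpin_gauge (ep : ι → V × V) (S T : V → Bool) (b : ι) :
    bondSpin ep (spinGauge T S) b = bondSpin ep S b * bondSpin ep T b := by
  unfold bondSpin spinGauge
  simp only [Equiv.coe_fn_mk, spin_beq]; ring

lemma partitionFn_pos (ep : ι → V × V) (y j : ι → ℝ) : 0 < partitionFn ep y j := by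
  unfold partitionFn
  exact Finset.sum_pos (fun _ _ => Real.exp_pos _) Finset.univ_nonempty

/-- local bond magnetisation -/
@[irreducible] def mag (ep : ι → V × V) (y j : ι → ℝ) (b : ι) : ℝ := gibbs ep y j (fun S => bondSpin ep S b)

lemma abs_mag_le (ep : ι → V × V) (y j : ι → ℝ) (b : ι) : |mag ep y j b| ≤ 1 := by
  unfold mag gibbs
  rw [abs_div, abs_of_pos (partitionFn_pos ep y j), div_le_one (partitionFn_pos ep y j)]
  refine (Finset.abs_sum_le_sum_abs _ _).trans (le_of_eq ?_)
  unfold partitionFn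
  refine Finset.sum_congr rfl fun S _ => ?_
  rw [abs_mul, abs_bondSpin, one_mul, Real.abs_exp]

lemma continuous_potential (ep : ι → V × V) (S : V → Bool) :
    Continuous fun p : (ι → ℝ) × (ι → ℝ) => potential ep p.1 p.2 S := by
  unfold potential; fun_prop

lemma continuous_partitionFn (ep : ι → V × V) :
    Continuous fun p : (ι → ℝ) × (ι → ℝ) => partitionFn ep p.1 p.2 := by
  unfold partitionFn
  exact continuous_finsetSum _ fun S _ => Real.continuous_exp.comp (continuous_potential ep S)

lemma continuous_mag (ep : ι → V × V) (b : ι) :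
    Continuous fun p : (ι → ℝ) × (ι → ℝ) => mag ep p.1 p.2 b := by
  unfold mag gibbs
  refine Continuous.div ?_ (continuous_partitionFn ep) fun _ => (partitionFn_pos ep _ _).ne'
  exact continuous_finsetSum _ fun S _ => continuous_const.mul
    (Real.continuous_exp.comp (continuous_potential ep S))

lemma continuous_logZ (ep : ι → V × V) :
    Continuous fun p : (ι → ℝ) × (ι → ℝ) => Real.log (partitionFn ep p.1 p.2) :=
  (continuous_partitionFn ep).log fun _ => (partitionFn_pos ep _ _).ne'

/-- shift -/
lemma couplings_shift (y : ι → ℝ) (F : (ι → ℝ) → ℝ) :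
    ∫ j, F j ∂(couplings y) = ∫ g, F (g + y) ∂(couplings (0 : ι → ℝ)) := by
  have h : MeasurePreserving (fun g : ι → ℝ => g + y) (couplings (0 : ι → ℝ)) (couplings y) := by
    unfold couplings
    refine measurePreserving_pi _ _ (f := fun b t => t + y b) fun b => ⟨by fun_prop, ?_⟩
    simpa using gaussianReal_map_add_const (μ := 0) (v := 1) (y b)
  exact (h.integral_comp (MeasurableEquiv.addRight y).measurableEmbedding F).symm

lemma gaussian_density (y : ℝ) : gaussianReal y 1 =
    (gaussianReal 0 1).withDensity (fun t => ENNReal.ofReal (Real.exp (y * t - y ^ 2 / 2))) := by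
  rw [gaussianReal_of_var_ne_zero _ one_ne_zero, gaussianReal_of_var_ne_zero _ one_ne_zero,
    ← withDensity_mul _ (measurable_gaussianPDF _ _) (by fun_prop)]
  congr 1
  ext t
  simp only [Pi.mul_apply, gaussianPDF]
  rw [← ENNReal.ofReal_mul (gaussianPDFReal_nonneg _ _ _)]
  congr 1
  simp only [gaussianPDFReal]
  rw [mul_assoc (√_)⁻¹ (Real.exp _), ← Real.exp_add]
  congr 2
  push_cast
  ring

/-- density -/
lemma couplings_withDensity (y : ι → ℝ) : couplings y = (couplings (0 : ι → ℝ)).withDensity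
    (fun j => ∏ b, ENNReal.ofReal (Real.exp (y b * j b - y b ^ 2 / 2))) := by
  conv_lhs => unfold couplings
  refine Measure.pi_eq fun s hs => ?_
  have hm : ∀ b, Measurable fun t : ℝ => (s b).indicator
      (fun t => ENNReal.ofReal (Real.exp (y b * t - y b ^ 2 / 2))) t := fun b =>
    Measurable.indicator (by fun_prop) (hs b)
  have hind := iIndepFun_pi (μ := fun _ : ι => gaussianReal 0 1)
    (X := fun b t => (s b).indicator
      (fun t => ENNReal.ofReal (Real.exp (y b * t - y b ^ 2 / 2))) t)
    (fun b => (hm b).aemeasurable)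
  have hp := lintegral_prod_eq_prod_lintegral_of_indepFun Finset.univ _ hind
    (fun b => (hm b).comp (measurable_pi_apply b))
  have hs' : MeasurableSet (Set.univ.pi s) := MeasurableSet.univ_pi hs
  rw [withDensity_apply _ hs', ← lintegral_indicator hs']
  unfold couplings
  refine Eq.trans (lintegral_congr fun j => ?_) (hp.trans (Finset.prod_congr rfl fun b _ => ?_))
  · by_cases hj : j ∈ Set.univ.pi s
    · rw [Set.indicator_of_mem hj]
      exact Finset.prod_congr rfl fun b _ => (Set.indicator_of_mem (hj b trivial)
        (fun t => ENNReal.ofReal (Real.exp (y b * t - y b ^ 2 / 2)))).symm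
    · rw [Set.indicator_of_notMem hj]
      simp only [Set.mem_pi, Set.mem_univ, true_implies, not_forall] at hj
      obtain ⟨b, hb⟩ := hj
      exact (Finset.prod_eq_zero (Finset.mem_univ b) (Set.indicator_of_notMem hb _)).symm
  · rw [gaussian_density (y b), withDensity_apply _ (hs b), ← lintegral_indicator (hs b)]
    exact (measurePreserving_eval (fun _ : ι => gaussianReal 0 1) b).lintegral_comp (hm b)

lemma couplings_density (y : ι → ℝ) (F : (ι → ℝ) → ℝ) :
    ∫ j, F j ∂(couplings y) = ∫ g, Real.exp (∑ b, (y b * g b - y b ^ 2 / 2)) * F g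
      ∂(couplings (0 : ι → ℝ)) := by
  rw [couplings_withDensity y, integral_withDensity_eq_integral_toReal_smul]
  · refine integral_congr_ae (Eventually.of_forall fun g => ?_)
    simp only [ENNReal.toReal_prod, smul_eq_mul, Real.exp_sum]
    congr 1
    refine Finset.prod_congr rfl fun b _ => ENNReal.toReal_ofReal (Real.exp_pos _).le
  · fun_prop
  · refine Eventually.of_forall fun g => ?_
    exact ENNReal.prod_lt_top fun b _ => ENNReal.ofReal_lt_top

lemma integrable_exp_abs (c : ℝ) (b : ι) :
    Integrable (fun g : ι → ℝ => Real.exp (c * |g b|)) (couplings (0 : ι → ℝ)) := by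
  have h1 : Integrable (fun t : ℝ => Real.exp (c * |t|)) (gaussianReal 0 1) :=
    integrable_exp_mul_abs (X := fun t : ℝ => t) (integrable_exp_mul_gaussianReal c)
      (integrable_exp_mul_gaussianReal (-c))
  exact (measurePreserving_eval (fun _ : ι => gaussianReal 0 1) b).integrable_comp_of_integrable h1

lemma integrable_abs (b : ι) :
    Integrable (fun g : ι → ℝ => |g b|) (couplings (0 : ι → ℝ)) := by
  refine (integrable_exp_abs 1 b).mono'
    (continuous_apply b).abs.aestronglyMeasurable (Eventually.of_forall fun g => ?_)
  rw [Real.norm_eq_abs, abs_abs, one_mul]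
  linarith [Real.add_one_le_exp |g b|]

/-- the weight is integrable, times a bounded function -/
lemma integrable_weight (y : ι → ℝ) : Integrable
    (fun g : ι → ℝ => Real.exp (∑ b, (y b * g b - y b ^ 2 / 2))) (couplings (0 : ι → ℝ)) := by
  by_contra h
  have h1 := couplings_density y (fun _ => 1)
  simp only [mul_one] at h1
  rw [integral_undef h] at h1
  simp at h1

/-- sign flip invariance -/
lemma couplings_flip (ep : ι → V × V) (T : V → Bool) (F : (ι → ℝ) → ℝ) :
    ∫ g, F (fun b => bondSpin ep T b * g b) ∂(couplings (0 : ι → ℝ))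
      = ∫ g, F g ∂(couplings (0 : ι → ℝ)) := by
  have h : MeasurePreserving (fun (g : ι → ℝ) b => bondSpin ep T b * g b)
      (couplings (0 : ι → ℝ)) (couplings (0 : ι → ℝ)) := by
    unfold couplings
    refine measurePreserving_pi _ _ (f := fun b t => bondSpin ep T b * t)
      fun b => ⟨by fun_prop, ?_⟩
    have h2 := gaussianReal_map_const_mul (μ := 0) (v := 1) (bondSpin ep T b)
    rw [Pi.zero_apply, h2]
    congr 1
    · simp
    · ext; simp [pow_two, bondSpin_sq]
  have hinv : Function.Involutive (fun (g : ι → ℝ) b => bondSpin ep T b * g b) := by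
    intro g; funext b
    simp only [← mul_assoc, bondSpin_sq, one_mul]
  exact h.integral_comp (MeasurableEquiv.mk hinv.toPerm h.measurable h.measurable).measurableEmbedding F

lemma potential_flip (ep : ι → V × V) (y g : ι → ℝ) (S T : V → Bool) :
    potential ep y (fun b => bondSpin ep T b * g b) (spinGauge T S) = potential ep y g S := by
  unfold potential
  refine Finset.sum_congr rfl fun b _ => ?_
  rw [bondSpin_gauge]
  linear_combination (y b * g b * bondSpin ep S b) * bondSpin_sq ep T b

lemma partitionFn_flip (ep : ι → V × V) (y g : ι → ℝ) (T : V → Bool) :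
    partitionFn ep y (fun b => bondSpin ep T b * g b) = partitionFn ep y g := by
  unfold partitionFn
  rw [← Equiv.sum_comp (spinGauge T)]
  simp only [potential_flip]

lemma mag_flip (ep : ι → V × V) (y g : ι → ℝ) (T : V → Bool) (b : ι) :
    mag ep y (fun b => bondSpin ep T b * g b) b = bondSpin ep T b * mag ep y g b := by
  unfold mag gibbs
  rw [← Equiv.sum_comp (spinGauge T), partitionFn_flip, ← mul_div_assoc, Finset.mul_sum]
  simp only [potential_flip, bondSpin_gauge]
  congr 1
  exact Finset.sum_congr rfl fun S _ => by ring

lemma sum_weight (y : ι → ℝ) (g : ι → ℝ) (ep : ι → V × V) (T : V → Bool) :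
    Real.exp (∑ b, (y b * (bondSpin ep T b * g b) - y b ^ 2 / 2)) =
      Real.exp (-∑ b, y b ^ 2 / 2) * Real.exp (potential ep y g T) := by
  rw [← Real.exp_add]
  congr 1
  unfold potential
  rw [Finset.sum_sub_distrib, neg_add_eq_sub]
  congr 1
  exact Finset.sum_congr rfl fun S _ => by ring

lemma integrable_boltz (ep : ι → V × V) (y : ι → ℝ) (T : V → Bool) (f : (ι → ℝ) → ℝ)
    (hf : Continuous f) (hb : ∀ g, |f g| ≤ 1) :
    Integrable (fun g => Real.exp (-∑ b, y b ^ 2 / 2) * Real.exp (potential ep y g T) * f g)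
      (couplings (0 : ι → ℝ)) := by
  refine Integrable.mul_bdd (c := 1) ?_ hf.aestronglyMeasurable (Eventually.of_forall hb)
  have := integrable_weight (fun b => y b * bondSpin ep T b)
  refine this.congr (Eventually.of_forall fun g => ?_)
  simp only [← sum_weight]
  congr 1
  refine Finset.sum_congr rfl fun b _ => ?_
  linear_combination (-y b ^ 2 / 2) * bondSpin_sq ep T b

lemma continuous_mag' (ep : ι → V × V) (y : ι → ℝ) (b : ι) :
    Continuous fun g : ι → ℝ => mag ep y g b := by
  have h := continuous_mag ep b
  fun_prop

/-- Nishimori identity -/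
lemma nishimori (ep : ι → V × V) (y : ι → ℝ) (b : ι) :
    ∫ j, mag ep y j b ∂(couplings y) = ∫ j, mag ep y j b ^ 2 ∂(couplings y) := by
  have hcm := continuous_mag' ep y b
  have habs : ∀ g, |mag ep y g b| ≤ 1 := fun g => abs_mag_le ep y g b
  have key1 : ∀ T : V → Bool, ∫ j, mag ep y j b ∂(couplings y) =
      ∫ g, Real.exp (-∑ b, y b ^ 2 / 2) * Real.exp (potential ep y g T) *
        (bondSpin ep T b * mag ep y g b) ∂(couplings (0 : ι → ℝ)) := by
    intro T
    rw [couplings_density, ← couplings_flip ep T]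
    simp only [sum_weight, mag_flip]
  have key2 : ∀ T : V → Bool, ∫ j, mag ep y j b ^ 2 ∂(couplings y) =
      ∫ g, Real.exp (-∑ b, y b ^ 2 / 2) * Real.exp (potential ep y g T) *
        (mag ep y g b ^ 2) ∂(couplings (0 : ι → ℝ)) := by
    intro T
    rw [couplings_density, ← couplings_flip ep T]
    simp only [sum_weight, mag_flip, mul_pow]
    simp only [pow_two (bondSpin ep T b), bondSpin_sq, one_mul]
  have hsum : ∑ T : V → Bool, ∫ j, mag ep y j b ∂(couplings y) =
      ∑ T : V → Bool, ∫ j, mag ep y j b ^ 2 ∂(couplings y) := by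
    rw [Finset.sum_congr rfl fun T _ => key1 T, Finset.sum_congr rfl fun T _ => key2 T,
      ← integral_finsetSum, ← integral_finsetSum]
    · refine integral_congr_ae (Eventually.of_forall fun g => ?_)
      simp only
      rw [← Finset.sum_mul, ← Finset.mul_sum]
      have hZ := partitionFn_pos ep y g
      have hm : ∑ S : V → Bool, bondSpin ep S b * Real.exp (potential ep y g S)
          = mag ep y g b * ∑ S : V → Bool, Real.exp (potential ep y g S) := by
        unfold mag gibbs
        rw [← partitionFn, div_mul_cancel₀ _ hZ.ne']
      calc _ = Real.exp (-∑ b, y b ^ 2 / 2) * mag ep y g b *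
            ∑ S : V → Bool, bondSpin ep S b * Real.exp (potential ep y g S) := by
            rw [Finset.mul_sum]
            exact Finset.sum_congr rfl fun T _ => by ring
        _ = _ := by rw [hm]; ring
    · intro T _
      exact integrable_boltz ep y T _ (hcm.pow 2) fun g => by
        rw [abs_pow]; exact pow_le_one₀ (abs_nonneg _) (habs g)
    · intro T _
      exact integrable_boltz ep y T _ (continuous_const.mul hcm) fun g => by
        rw [abs_mul, abs_bondSpin, one_mul]; exact habs g
  rw [Finset.sum_const, Finset.sum_const] at hsum
  have hc : (Finset.univ : Finset (V → Bool)).card ≠ 0 :=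
    Finset.card_ne_zero.mpr Finset.univ_nonempty
  exact smul_right_injective ℝ hc hsum

/-- directional derivatives of partition sums -/
lemma hasDerivAt_expSum {κ : Type*} [Fintype κ] (c : κ → ℝ) (u : κ → ℝ → ℝ) (u' : κ → ℝ) (s : ℝ)
    (hu : ∀ S, HasDerivAt (u S) (u' S) s) :
    HasDerivAt (fun s => ∑ S, c S * Real.exp (u S s)) (∑ S, c S * (Real.exp (u S s) * u' S)) s :=
  HasDerivAt.fun_sum fun S _ => ((hu S).exp).const_mul (c S)

lemma hasDerivAt_quot {κ : Type*} [Fintype κ] [Nonempty κ] (e : κ → ℝ) (he : ∀ S, e S * e S = 1)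
    (u : κ → ℝ → ℝ) (c a : ℝ) (hu : ∀ S, HasDerivAt (u S) (c * e S) a) :
    HasDerivAt (fun a => (∑ S, e S * Real.exp (u S a)) / ∑ S, Real.exp (u S a))
      (c * (1 - ((∑ S, e S * Real.exp (u S a)) / ∑ S, Real.exp (u S a)) ^ 2)) a := by
  have hN := hasDerivAt_expSum e _ _ a hu
  have hZ := hasDerivAt_expSum (fun _ => (1:ℝ)) _ _ a hu
  simp only [one_mul] at hZ
  have hpos : 0 < ∑ S, Real.exp (u S a) :=
    Finset.sum_pos (fun _ _ => Real.exp_pos _) Finset.univ_nonempty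
  refine (hN.div hZ hpos.ne').congr_deriv ?_
  have e1 : ∑ S, e S * (Real.exp (u S a) * (c * e S)) = c * ∑ S, Real.exp (u S a) := by
    rw [Finset.mul_sum]
    refine Finset.sum_congr rfl fun S _ => ?_
    linear_combination (c * Real.exp (u S a)) * he S
  have e2 : ∑ S, (Real.exp (u S a) * (c * e S)) = c * ∑ S, e S * Real.exp (u S a) := by
    rw [Finset.mul_sum]
    exact Finset.sum_congr rfl fun S _ => by ring
  rw [e1, e2]
  generalize ∑ S, Real.exp (u S a) = Z at *
  generalize ∑ S, e S * Real.exp (u S a) = N at *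
  field_simp

lemma mag_eq (ep : ι → V × V) (y j : ι → ℝ) (b : ι) : mag ep y j b =
    (∑ S : V → Bool, bondSpin ep S b * Real.exp (potential ep y j S)) /
      ∑ S : V → Bool, Real.exp (potential ep y j S) := by
  unfold mag gibbs partitionFn; rfl

lemma hasDerivAt_mag (ep : ι → V × V) (y g : ι → ℝ) (b : ι) (a : ℝ) :
    HasDerivAt (fun a => mag ep y (g + Pi.single b a) b)
      (y b * (1 - mag ep y (g + Pi.single b a) b ^ 2)) a := by
  have hu : ∀ S, HasDerivAt (fun a => potential ep y (g + Pi.single b a) S)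
      (y b * bondSpin ep S b) a := by
    intro S
    have h : (fun a : ℝ => potential ep y (g + Pi.single b a) S) =
        fun a => potential ep y g S + a * (y b * bondSpin ep S b) := by
      funext a
      unfold potential
      have : ∀ c, y c * (g + Pi.single b a : ι → ℝ) c * bondSpin ep S c =
          y c * g c * bondSpin ep S c + (if c = b then a * (y b * bondSpin ep S b) else 0) := by
        intro c
        by_cases h : c = b
        · subst h; simp; ring
        · simp [h]
      simp only [this, Finset.sum_add_distrib, Finset.sum_ite_eq', Finset.mem_univ, if_true]
    rw [h]
    simpa using ((hasDerivAt_id a).mul_const (y b * bondSpin ep S b)).const_add (potential ep y g S)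
  simp only [mag_eq]
  exact hasDerivAt_quot _ (fun S => bondSpin_sq ep S b) _ _ _ hu

/-- Gaussian integration by parts -/
lemma gaussian_ibp (ep : ι → V × V) (y : ι → ℝ) (b : ι) :
    ∫ g, g b * mag ep y (g + y) b ∂(couplings (0 : ι → ℝ)) =
      y b * (1 - ∫ g, mag ep y (g + y) b ^ 2 ∂(couplings (0 : ι → ℝ))) := by
  have hm0 := continuous_mag' ep y b
  have hcm : Continuous fun g : ι → ℝ => mag ep y (g + y) b := by fun_prop
  have hcm2 : ∀ a : ℝ, Continuous fun g : ι → ℝ => mag ep y (g + y + Pi.single b a) b := by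
    fun_prop
  have hle : ∀ g, |mag ep y g b| ≤ 1 := fun g => abs_mag_le ep y g b
  have hintg : ∀ f : (ι → ℝ) → ℝ, Continuous f → (∀ g, |f g| ≤ 1) →
      Integrable f (couplings (0 : ι → ℝ)) := fun f hf hb =>
    Integrable.of_bound hf.aestronglyMeasurable 1 (Eventually.of_forall hb)
  have heq : (fun a : ℝ => ∫ g, mag ep y (g + y + Pi.single b a) b ∂(couplings (0 : ι → ℝ))) =
      fun a => ∫ g, Real.exp (a * g b - a ^ 2 / 2) * mag ep y (g + y) b
        ∂(couplings (0 : ι → ℝ)) := by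
    funext a
    have h := couplings_density (Pi.single b a) (fun g => mag ep y (g + y) b)
    rw [couplings_shift] at h
    have hs : ∀ g : ι → ℝ, ∑ c, ((Pi.single b a : ι → ℝ) c * g c - (Pi.single b a : ι → ℝ) c ^ 2 / 2)
        = a * g b - a ^ 2 / 2 := by
      intro g
      rw [Finset.sum_eq_single b]
      · simp
      · intro c _ hc; simp [hc]
      · simp
    simp only [hs] at h
    rw [← h]
    refine integral_congr_ae (Eventually.of_forall fun g => ?_)
    simp only
    rw [add_right_comm]
  have h1 := (hasDerivAt_integral_of_dominated_loc_of_deriv_le (μ := couplings (0 : ι → ℝ))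
    (F := fun a g => mag ep y (g + y + Pi.single b a) b)
    (F' := fun a g => y b * (1 - mag ep y (g + y + Pi.single b a) b ^ 2))
    (x₀ := (0:ℝ)) (s := Set.univ) (bound := fun _ => |y b|) univ_mem
    (Eventually.of_forall fun a => (hcm2 a).aestronglyMeasurable)
    (hintg _ (hcm2 0) fun g => hle _)
    (continuous_const.mul (continuous_const.sub ((hcm2 0).pow 2))).aestronglyMeasurable
    (Eventually.of_forall fun g a _ => by
      rw [Real.norm_eq_abs, abs_mul]
      refine mul_le_of_le_one_right (abs_nonneg _) ?_
      have := (sq_le_one_iff_abs_le_one _).2 (hle (g + y + Pi.single b a))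
      rw [abs_le]; constructor <;> nlinarith [sq_nonneg (mag ep y (g + y + Pi.single b a) b)])
    (integrable_const _)
    (Eventually.of_forall fun g a _ => hasDerivAt_mag ep y (g + y) b a)).2
  have h2 := (hasDerivAt_integral_of_dominated_loc_of_deriv_le (μ := couplings (0 : ι → ℝ))
    (F := fun a g => Real.exp (a * g b - a ^ 2 / 2) * mag ep y (g + y) b)
    (F' := fun a g => (Real.exp (a * g b - a ^ 2 / 2) * (g b - a)) * mag ep y (g + y) b)
    (x₀ := (0:ℝ)) (s := Metric.ball 0 1) (bound := fun g => Real.exp (2 * |g b|))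
    (Metric.ball_mem_nhds _ one_pos)
    (Eventually.of_forall fun a => by
      have : Continuous fun g : ι → ℝ => Real.exp (a * g b - a ^ 2 / 2) := by fun_prop
      exact (this.mul hcm).aestronglyMeasurable)
    (by simpa using hintg _ hcm fun g => hle _)
    (by
      have : Continuous fun g : ι → ℝ => Real.exp (0 * g b - 0 ^ 2 / 2) * (g b - 0) := by fun_prop
      exact (this.mul hcm).aestronglyMeasurable)
    (Eventually.of_forall fun g a ha => by
      rw [mem_ball_zero_iff, Real.norm_eq_abs] at ha
      rw [Real.norm_eq_abs, abs_mul, abs_mul, Real.abs_exp]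
      refine (mul_le_of_le_one_right (by positivity) (hle _)).trans ?_
      have h3 : |g b - a| ≤ |g b| + |a| := abs_sub _ _
      have h4 : |g b - a| ≤ Real.exp |g b| := by linarith [Real.add_one_le_exp |g b|]
      have h5 : a * g b ≤ |g b| := by
        calc a * g b ≤ |a * g b| := le_abs_self _
          _ = |a| * |g b| := abs_mul _ _
          _ ≤ |g b| := mul_le_of_le_one_left (abs_nonneg _) ha.le
      have h6 : Real.exp (a * g b - a ^ 2 / 2) ≤ Real.exp |g b| :=
        Real.exp_le_exp.2 (by nlinarith [sq_nonneg a])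
      calc _ ≤ Real.exp |g b| * Real.exp |g b| := by gcongr
        _ = _ := by rw [← Real.exp_add]; ring_nf)
    (integrable_exp_abs 2 b)
    (Eventually.of_forall fun g a _ => by
      refine HasDerivAt.mul_const (HasDerivAt.exp ?_) _
      have := ((hasDerivAt_id a).mul_const (g b)).sub (((hasDerivAt_id a).pow 2).div_const 2)
      refine this.congr_deriv ?_
      simp)).2
  rw [heq] at h1
  have h3 := h2.unique h1
  simp only [Pi.single_zero, add_zero] at h3
  rw [integral_const_mul, integral_sub (integrable_const _)
    (hintg (fun g => mag ep y (g + y) b ^ 2) (hcm.pow 2) fun g => by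
        rw [abs_pow]; exact pow_le_one₀ (abs_nonneg _) (hle _))] at h3
  simpa using h3

lemma hasDerivAt_logSum {κ β : Type*} [Fintype κ] [Nonempty κ] [Fintype β] (e : κ → β → ℝ)
    (u : κ → ℝ → ℝ) (c : β → ℝ) (a : ℝ) (hu : ∀ S, HasDerivAt (u S) (∑ b, c b * e S b) a) :
    HasDerivAt (fun a => Real.log (∑ S, Real.exp (u S a)))
      (∑ b, c b * ((∑ S, e S b * Real.exp (u S a)) / ∑ S, Real.exp (u S a))) a := by
  have hZ := hasDerivAt_expSum (fun _ => (1:ℝ)) _ _ a hu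
  simp only [one_mul] at hZ
  have hpos : 0 < ∑ S, Real.exp (u S a) :=
    Finset.sum_pos (fun _ _ => Real.exp_pos _) Finset.univ_nonempty
  refine (hZ.log hpos.ne').congr_deriv ?_
  simp only [← mul_div_assoc, ← Finset.sum_div]
  congr 1
  simp only [Finset.mul_sum]
  rw [Finset.sum_comm]
  exact Finset.sum_congr rfl fun b _ => Finset.sum_congr rfl fun S _ => by ring

lemma hasDerivAt_logZ (ep : ι → V × V) (y₀ v g : ι → ℝ) (s : ℝ) :
    HasDerivAt (fun s : ℝ => Real.log (partitionFn ep (y₀ + s • v) (g + (y₀ + s • v))))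
      (∑ b, (v b * (g b + 2 * (y₀ + s • v) b)) * mag ep (y₀ + s • v) (g + (y₀ + s • v)) b) s := by
  have hu : ∀ S : V → Bool, HasDerivAt
      (fun s : ℝ => potential ep (y₀ + s • v) (g + (y₀ + s • v)) S)
      (∑ b, (v b * (g b + 2 * (y₀ + s • v) b)) * bondSpin ep S b) s := by
    intro S
    unfold potential
    refine HasDerivAt.fun_sum fun b _ => HasDerivAt.mul_const ?_ _
    simp only [Pi.add_apply, Pi.smul_apply, smul_eq_mul]
    have h1 : HasDerivAt (fun s : ℝ => y₀ b + s * v b) (v b) s := by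
      simpa using ((hasDerivAt_id s).mul_const (v b)).const_add (y₀ b)
    refine (h1.mul (h1.const_add (g b))).congr_deriv ?_
    ring
  simp only [mag_eq]
  unfold partitionFn
  exact hasDerivAt_logSum (fun S b => bondSpin ep S b) _ _ _ hu

lemma abs_potential_le (ep : ι → V × V) (y j : ι → ℝ) (S : V → Bool) :
    |potential ep y j S| ≤ ∑ b, |y b| * |j b| := by
  unfold potential
  refine (Finset.abs_sum_le_sum_abs _ _).trans (le_of_eq ?_)
  refine Finset.sum_congr rfl fun b _ => ?_
  rw [abs_mul, abs_mul, abs_bondSpin, mul_one]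

lemma abs_logZ_le (ep : ι → V × V) (y j : ι → ℝ) :
    |Real.log (partitionFn ep y j)| ≤
      Real.log (Fintype.card (V → Bool)) + ∑ b, |y b| * |j b| := by
  have hpos := partitionFn_pos ep y j
  have hcard : (1:ℝ) ≤ Fintype.card (V → Bool) := by
    exact_mod_cast Nat.one_le_iff_ne_zero.2 Fintype.card_ne_zero
  have hlog := Real.log_nonneg hcard
  set A := ∑ b, |y b| * |j b| with hA
  have hS : ∀ S, |potential ep y j S| ≤ A := abs_potential_le ep y j
  have h1 : partitionFn ep y j ≤ Fintype.card (V → Bool) * Real.exp A := by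
    unfold partitionFn
    refine (Finset.sum_le_card_nsmul _ _ (Real.exp A) fun S _ =>
      Real.exp_le_exp.2 (abs_le.1 (hS S)).2).trans (le_of_eq ?_)
    rw [nsmul_eq_mul, Finset.card_univ]
  have h2 : Real.exp (-A) ≤ partitionFn ep y j := by
    unfold partitionFn
    refine le_trans (Real.exp_le_exp.2 (abs_le.1 (hS (fun _ => true))).1) ?_
    exact Finset.single_le_sum (f := fun S => Real.exp (potential ep y j S))
      (fun _ _ => (Real.exp_pos _).le) (Finset.mem_univ _)
  rw [abs_le]
  constructor
  · have := Real.log_le_log (Real.exp_pos _) h2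
    rw [Real.log_exp] at this
    linarith
  · have := Real.log_le_log hpos h1
    rw [Real.log_mul (by positivity) (Real.exp_pos _).ne', Real.log_exp] at this
    linarith

lemma integrable_logZ (ep : ι → V × V) (y : ι → ℝ) :
    Integrable (fun g : ι → ℝ => Real.log (partitionFn ep y (g + y))) (couplings (0 : ι → ℝ)) := by
  have hc := continuous_logZ ep
  have hc' : Continuous (fun g : ι → ℝ => Real.log (partitionFn ep y (g + y))) := by
    have h : Continuous fun g : ι → ℝ => (y, g + y) := by fun_prop
    exact hc.comp h
  have hi : Integrable (fun g : ι → ℝ => Real.log (Fintype.card (V → Bool)) +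
      ∑ b, |y b| * (|g b| + |y b|)) (couplings (0 : ι → ℝ)) :=
    (integrable_const _).add (integrable_finsetSum _ fun b _ =>
      ((integrable_abs b).add (integrable_const _)).const_mul _)
  refine hi.mono' hc'.aestronglyMeasurable (Eventually.of_forall fun g => ?_)
  refine (abs_logZ_le ep y (g + y)).trans ?_
  gcongr with b
  exact abs_add_le _ _

/-- derivative of the pressure along a line -/
lemma hasDerivAt_pressure (ep : ι → V × V) (y₀ v : ι → ℝ) (s : ℝ) :
    HasDerivAt (fun s : ℝ => pressure ep (y₀ + s • v))
      (∑ b, v b * (y₀ + s • v) b * (1 + ∫ j, mag ep (y₀ + s • v) j b ∂(couplings (y₀ + s • v)))) s := by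
  have hP : (fun s : ℝ => pressure ep (y₀ + s • v)) = fun s =>
      ∫ g, Real.log (partitionFn ep (y₀ + s • v) (g + (y₀ + s • v))) ∂(couplings (0 : ι → ℝ)) := by
    funext s
    unfold pressure quenched
    exact couplings_shift _ _
  have hmc : ∀ b, Continuous fun g : ι → ℝ => mag ep (y₀ + s • v) (g + (y₀ + s • v)) b := by
    intro b
    have := continuous_mag' ep (y₀ + s • v) b
    fun_prop
  have hle : ∀ (y g : ι → ℝ) b, |mag ep y g b| ≤ 1 := fun y g b => abs_mag_le ep y g b
  have h1 := (hasDerivAt_integral_of_dominated_loc_of_deriv_le (μ := couplings (0 : ι → ℝ))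
    (F := fun s g => Real.log (partitionFn ep (y₀ + s • v) (g + (y₀ + s • v))))
    (F' := fun s g => ∑ b, (v b * (g b + 2 * (y₀ + s • v) b)) *
      mag ep (y₀ + s • v) (g + (y₀ + s • v)) b)
    (x₀ := s) (s := Metric.ball s 1)
    (bound := fun g => ∑ b, |v b| * (|g b| + 2 * (|y₀ b| + (|s| + 1) * |v b|)))
    (Metric.ball_mem_nhds _ one_pos)
    (Eventually.of_forall fun s => (integrable_logZ ep _).aestronglyMeasurable)
    (integrable_logZ ep _)
    (by
      refine Continuous.aestronglyMeasurable (continuous_finsetSum _ fun b _ => ?_)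
      exact Continuous.mul (by fun_prop) (hmc b))
    (Eventually.of_forall fun g r hr => by
      rw [Metric.mem_ball, Real.dist_eq] at hr
      have hr' : |r| ≤ |s| + 1 := by
        have := abs_add_le (r - s) s
        rw [sub_add_cancel] at this
        linarith
      refine (Finset.abs_sum_le_sum_abs _ _).trans (Finset.sum_le_sum fun b _ => ?_)
      rw [abs_mul]
      refine (mul_le_of_le_one_right (abs_nonneg _) (hle _ _ _)).trans ?_
      rw [abs_mul]
      gcongr
      refine (abs_add_le _ _).trans ?_
      rw [abs_mul, abs_two]
      gcongr
      simp only [Pi.add_apply, Pi.smul_apply, smul_eq_mul]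
      refine (abs_add_le _ _).trans ?_
      rw [abs_mul]
      gcongr)
    (integrable_finsetSum _ fun b _ =>
      ((integrable_abs b).add (integrable_const _)).const_mul _)
    (Eventually.of_forall fun g r _ => hasDerivAt_logZ ep y₀ v g r)).2
  rw [hP]
  refine h1.congr_deriv ?_
  set y := y₀ + s • v with hy
  have hi1 : ∀ b, Integrable (fun g : ι → ℝ => mag ep y (g + y) b) (couplings (0 : ι → ℝ)) :=
    fun b => Integrable.of_bound (hmc b).aestronglyMeasurable 1 (Eventually.of_forall fun g => hle _ _ _)
  have hi2 : ∀ b, Integrable (fun g : ι → ℝ => g b * mag ep y (g + y) b)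
      (couplings (0 : ι → ℝ)) := by
    intro b
    refine (integrable_abs b).mono' ((continuous_apply b).mul (hmc b)).aestronglyMeasurable
      (Eventually.of_forall fun g => ?_)
    rw [Real.norm_eq_abs, abs_mul]
    exact mul_le_of_le_one_right (abs_nonneg _) (hle _ _ _)
  have hsplit : ∀ (g : ι → ℝ) b, v b * (g b + 2 * y b) * mag ep y (g + y) b =
      v b * (g b * mag ep y (g + y) b) + v b * 2 * y b * mag ep y (g + y) b := by
    intro g b; ring
  simp only [hsplit]
  rw [integral_finsetSum]
  swap
  · intro b _
    exact ((hi2 b).const_mul _).add ((hi1 b).const_mul _)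
  refine Finset.sum_congr rfl fun b _ => ?_
  rw [integral_add ((hi2 b).const_mul _) ((hi1 b).const_mul _), integral_const_mul,
    integral_const_mul, gaussian_ibp]
  have hn := nishimori ep y b
  rw [couplings_shift y (fun j => mag ep y j b),
    couplings_shift y (fun j => mag ep y j b ^ 2)] at hn
  rw [← hn, couplings_shift y (fun j => mag ep y j b)]
  ring

lemma continuous_avg (ep : ι → V × V) (y₀ v : ι → ℝ) (b : ι) :
    Continuous fun s : ℝ => ∫ j, mag ep (y₀ + s • v) j b ∂(couplings (y₀ + s • v)) := by
  simp only [couplings_shift (y₀ + _ • v)]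
  have hm := continuous_mag ep b
  refine continuous_of_dominated (bound := fun _ => 1) (fun s => ?_)
    (fun s => Eventually.of_forall fun g => abs_mag_le ep _ _ b) (integrable_const _)
    (Eventually.of_forall fun g => ?_)
  · exact Continuous.aestronglyMeasurable (by fun_prop)
  · fun_prop

lemma gibbs_avg (ep : ι → V × V) (y j : ι → ℝ) (C : Finset ι) :
    gibbs ep y j (fun S => (C.card : ℝ)⁻¹ * ∑ b ∈ C, bondSpin ep S b) =
      (C.card : ℝ)⁻¹ * ∑ b ∈ C, mag ep y j b := by
  unfold mag gibbs
  rw [← Finset.sum_div, ← mul_div_assoc, Finset.sum_comm, Finset.mul_sum]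
  congr 1
  exact Finset.sum_congr rfl fun S _ => by rw [← Finset.sum_mul]; ring

lemma quenched_avg (ep : ι → V × V) (y : ι → ℝ) (C : Finset ι) :
    quenched y (fun j => gibbs ep y j (fun S => (C.card : ℝ)⁻¹ * ∑ b ∈ C, bondSpin ep S b)) =
      (C.card : ℝ)⁻¹ * ∑ b ∈ C, ∫ j, mag ep y j b ∂(couplings y) := by
  unfold quenched
  simp only [gibbs_avg]
  rw [integral_const_mul, integral_finsetSum]
  intro b _
  exact Integrable.of_bound (continuous_mag' ep y b).aestronglyMeasurable 1
    (Eventually.of_forall fun g => abs_mag_le ep _ _ b)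

end aux

/-- Integral representation of the corridor term: with `x_b(t) = x√t` for
`b ∈ C`, `x_b(t) = x` otherwise, and `P(t)` the quenched pressure at parameters `{x_b(t)}`,
`P(1) − P(0) = |C| (x²/2) (1 + ∫₀¹ [⟨S_C⟩_t]_t dt)`, where
`S_C = |C|⁻¹ Σ_{b∈C} S_b`. -/
theorem corridor_integral_representation
    {V ι : Type*} [Fintype V] [DecidableEq V] [Fintype ι] [DecidableEq ι]
    (ep : ι → V × V) (hep : ∀ b, (ep b).1 ≠ (ep b).2)
    (x : ℝ) (hx : 0 < x) (C : Finset ι) :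
    pressure ep (fun b => if b ∈ C then x * Real.sqrt 1 else x) -
        pressure ep (fun b => if b ∈ C then x * Real.sqrt 0 else x) =
      (C.card : ℝ) * (x ^ 2 / 2) *
        (1 + ∫ t in (0 : ℝ)..1,
          quenched (fun b => if b ∈ C then x * Real.sqrt t else x)
            (fun j => gibbs ep (fun b => if b ∈ C then x * Real.sqrt t else x) j
              (fun S => (C.card : ℝ)⁻¹ * ∑ b ∈ C, bondSpin ep S b))) := by
  simp only [quenched_avg]
  set y₀ : ι → ℝ := fun b => if b ∈ C then 0 else x with hy₀
  set v : ι → ℝ := fun b => if b ∈ C then x else 0 with hv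
  have hy : ∀ t : ℝ, (fun b => if b ∈ C then x * Real.sqrt t else x) = y₀ + Real.sqrt t • v := by
    intro t
    funext b
    by_cases hb : b ∈ C
    · simp [hy₀, hv, hb, mul_comm]
    · simp [hy₀, hv, hb]
  simp only [hy]
  set h : ι → ℝ → ℝ := fun b s => ∫ j, mag ep (y₀ + s • v) j b ∂(couplings (y₀ + s • v)) with hh
  have hcont : ∀ b, Continuous (h b) := fun b => continuous_avg ep y₀ v b
  have hcs : ∀ b, Continuous fun t : ℝ => h b (Real.sqrt t) := fun b =>
    (hcont b).comp Real.continuous_sqrt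
  have hder : ∀ s : ℝ, HasDerivAt (fun s : ℝ => pressure ep (y₀ + s • v))
      (∑ b ∈ C, x ^ 2 * s * (1 + h b s)) s := by
    intro s
    refine (hasDerivAt_pressure ep y₀ v s).congr_deriv ?_
    rw [← Finset.sum_subset (Finset.subset_univ C)]
    · refine Finset.sum_congr rfl fun b hb => ?_
      simp only [hh, Pi.add_apply, Pi.smul_apply, smul_eq_mul]
      simp only [hy₀, hv, hb, if_true]
      ring
    · intro b _ hb
      simp [hv, hb]
  have hFTC := intervalIntegral.integral_eq_sub_of_hasDerivAt_of_le (a := 0) (b := 1) zero_le_one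
    (f := fun t : ℝ => pressure ep (y₀ + Real.sqrt t • v))
    (f' := fun t => ∑ b ∈ C, x ^ 2 / 2 * (1 + h b (Real.sqrt t)))
    (by
      have hc : Continuous (fun s : ℝ => pressure ep (y₀ + s • v)) :=
        continuous_iff_continuousAt.2 fun s => (hder s).continuousAt
      exact (hc.comp Real.continuous_sqrt).continuousOn)
    (by
      intro t ht
      have h2 := (hder (Real.sqrt t)).comp t (Real.hasDerivAt_sqrt ht.1.ne')
      refine h2.congr_deriv ?_
      have hs : 0 < Real.sqrt t := Real.sqrt_pos.2 ht.1
      rw [Finset.sum_mul]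
      refine Finset.sum_congr rfl fun b _ => ?_
      field_simp)
    (by
      refine Continuous.intervalIntegrable (continuous_finsetSum _ fun b _ => ?_) _ _
      exact continuous_const.mul (continuous_const.add (hcs b)))
  have i1 : ∫ t in (0:ℝ)..1, ∑ b ∈ C, x ^ 2 / 2 * (1 + h b (Real.sqrt t)) =
      ∑ b ∈ C, ∫ t in (0:ℝ)..1, x ^ 2 / 2 * (1 + h b (Real.sqrt t)) := by
    refine intervalIntegral.integral_finsetSum fun b _ => ?_
    exact (continuous_const.mul (continuous_const.add (hcs b))).intervalIntegrable _ _
  have i2 : ∫ t in (0:ℝ)..1, ∑ b ∈ C, h b (Real.sqrt t) =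
      ∑ b ∈ C, ∫ t in (0:ℝ)..1, h b (Real.sqrt t) :=
    intervalIntegral.integral_finsetSum fun b _ => (hcs b).intervalIntegrable _ _
  rw [← hFTC, i1, intervalIntegral.integral_const_mul]
  change _ = (C.card : ℝ) * (x ^ 2 / 2) *
    (1 + (C.card : ℝ)⁻¹ * ∫ t in (0:ℝ)..1, ∑ b ∈ C, h b (Real.sqrt t))
  rw [i2]
  have e : ∀ b, ∫ t in (0:ℝ)..1, x ^ 2 / 2 * (1 + h b (Real.sqrt t)) =
      x ^ 2 / 2 * (1 + ∫ t in (0:ℝ)..1, h b (Real.sqrt t)) := by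
    intro b
    rw [intervalIntegral.integral_const_mul, intervalIntegral.integral_add
      (by simp) ((hcs b).intervalIntegrable _ _)]
    simp
  simp only [e]
  rw [← Finset.mul_sum, Finset.sum_add_distrib, Finset.sum_const, nsmul_eq_mul]
  rcases C.eq_empty_or_nonempty with rfl | hC
  · simp
  · have : (C.card : ℝ) ≠ 0 := by exact_mod_cast hC.card_pos.ne'
    field_simp

end
end

section
/- Surface-order bounds for the corridor term: fix x > 0 and a subset C ⊆ B of bonds; let P_B denote the quenched pressure with all parameters equal to x on the bond set B, and P_{B∖C} the quenched pressure of the same sites with bond set B∖C (equivalently, with x_b = 0 for b ∈ C). Then (x²/2) |C| ≤ P_B − P_{B∖C} ≤ x² |C|; in particular the difference is nonnegative and grows at most and at least proportionally to |C|. -/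
open MeasureTheory ProbabilityTheory Filter

noncomputable section

namespace Corridor

lemma gaussian_shift (m : ℝ) :
    gaussianReal m 1 = (gaussianReal 0 1).withDensity
      (fun z => ENNReal.ofReal (Real.exp (m * z - m ^ 2 / 2))) := by
  rw [gaussianReal_of_var_ne_zero _ one_ne_zero, gaussianReal_of_var_ne_zero _ one_ne_zero,
    ← withDensity_mul _ (measurable_gaussianPDF _ _) (by fun_prop)]
  congr 1
  ext z
  simp only [Pi.mul_apply, gaussianPDF]
  rw [← ENNReal.ofReal_mul (gaussianPDFReal_nonneg _ _ _)]
  congr 1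
  simp only [gaussianPDFReal, mul_assoc, ← Real.exp_add]
  congr 2
  simp only [NNReal.coe_one]
  ring

lemma couplings_shift {ι : Type*} [Fintype ι] (m : ι → ℝ) :
    couplings m = (couplings (fun _ : ι => 0)).withDensity
      (fun j => ENNReal.ofReal (Real.exp (∑ b, (m b * j b - m b ^ 2 / 2)))) := by
  unfold couplings
  apply Measure.pi_eq
  intro s hs
  rw [withDensity_apply _ (MeasurableSet.univ_pi hs)]
  rw [← lintegral_indicator (MeasurableSet.univ_pi hs)]
  have hi : iIndepFun (fun (b : ι) (j : ι → ℝ) =>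
      (s b).indicator (fun z => ENNReal.ofReal (Real.exp (m b * z - m b ^ 2 / 2))) (j b))
      (Measure.pi fun _ : ι => gaussianReal 0 1) := by
    apply iIndepFun_pi (μ := fun _ : ι => gaussianReal 0 1)
      (X := fun b => (s b).indicator (fun z => ENNReal.ofReal (Real.exp (m b * z - m b ^ 2 / 2))))
    intro b
    exact (Measurable.indicator (by fun_prop) (hs b)).aemeasurable
  have hm : ∀ b, Measurable (fun (j : ι → ℝ) =>
      (s b).indicator (fun z => ENNReal.ofReal (Real.exp (m b * z - m b ^ 2 / 2))) (j b)) := by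
    intro b
    have : Measurable ((s b).indicator
      (fun z => ENNReal.ofReal (Real.exp (m b * z - m b ^ 2 / 2)))) :=
      Measurable.indicator (by fun_prop) (hs b)
    exact this.comp (measurable_pi_apply b)
  have h := lintegral_prod_eq_prod_lintegral_of_indepFun Finset.univ _ hi hm
  have e : ∀ j : ι → ℝ, (Set.univ.pi s).indicator
      (fun j => ENNReal.ofReal (Real.exp (∑ b, (m b * j b - m b ^ 2 / 2)))) j =
      ∏ b, (s b).indicator (fun z => ENNReal.ofReal (Real.exp (m b * z - m b ^ 2 / 2))) (j b) := by
    intro j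
    by_cases hj : j ∈ Set.univ.pi s
    · rw [Set.indicator_of_mem hj, Real.exp_sum,
        ENNReal.ofReal_prod_of_nonneg (fun _ _ => (Real.exp_pos _).le)]
      refine Finset.prod_congr rfl fun b _ => ?_
      rw [Set.indicator_of_mem (hj b (Set.mem_univ b))]
    · rw [Set.indicator_of_notMem hj]
      simp only [Set.mem_pi, Set.mem_univ, true_implies, not_forall] at hj
      obtain ⟨b, hb⟩ := hj
      exact (Finset.prod_eq_zero (Finset.mem_univ b) (Set.indicator_of_notMem hb _)).symm
  simp_rw [e]
  rw [h]
  refine Finset.prod_congr rfl fun b _ => ?_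
  rw [gaussian_shift (m b), withDensity_apply _ (hs b), ← lintegral_indicator (hs b)]
  have hmp := measurePreserving_eval (fun _ : ι => gaussianReal 0 1) b
  exact hmp.lintegral_comp (f := (s b).indicator
      (fun z => ENNReal.ofReal (Real.exp (m b * z - m b ^ 2 / 2))))
      (Measurable.indicator (by fun_prop) (hs b))

instance {ι : Type*} [Fintype ι] (m : ι → ℝ) : IsProbabilityMeasure (couplings m) := by
  unfold couplings; infer_instance

lemma integral_shift {ι : Type*} [Fintype ι] (m : ι → ℝ) (F : (ι → ℝ) → ℝ) :
    ∫ j, F j ∂(couplings m) = Real.exp (-∑ b, m b ^ 2 / 2) *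
      ∫ j, Real.exp (∑ b, m b * j b) * F j ∂(couplings (fun _ : ι => 0)) := by
  rw [couplings_shift m, integral_withDensity_eq_integral_toReal_smul (by fun_prop) (by simp),
    ← integral_const_mul]
  congr 1
  ext j
  rw [ENNReal.toReal_ofReal (Real.exp_pos _).le, smul_eq_mul, ← mul_assoc, ← Real.exp_add]
  congr 2
  rw [Finset.sum_sub_distrib]; ring

lemma integrable_shift {ι : Type*} [Fintype ι] (m : ι → ℝ) (F : (ι → ℝ) → ℝ)
    (hF : Integrable F (couplings m)) :
    Integrable (fun j => Real.exp (∑ b, m b * j b) * F j) (couplings (fun _ : ι => 0)) := by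
  rw [couplings_shift m, integrable_withDensity_iff_integrable_smul' (by fun_prop) (by simp)] at hF
  refine (hF.const_mul (Real.exp (∑ b, m b ^ 2 / 2))).congr (ae_of_all _ fun j => ?_)
  simp only
  rw [ENNReal.toReal_ofReal (Real.exp_pos _).le, smul_eq_mul, ← mul_assoc, ← Real.exp_add]
  congr 2
  rw [Finset.sum_sub_distrib]; ring

lemma integrable_coord {ι : Type*} [Fintype ι] (m : ι → ℝ) (b : ι) :
    Integrable (fun j : ι → ℝ => j b) (couplings m) := by
  have h : Integrable id (gaussianReal (m b) 1) :=
    memLp_one_iff_integrable.mp (by exact_mod_cast memLp_id_gaussianReal 1)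
  exact integrable_comp_eval (μ := fun b => gaussianReal (m b) 1) (i := b) h

lemma integral_coord {ι : Type*} [Fintype ι] (m : ι → ℝ) (b : ι) :
    ∫ j : ι → ℝ, j b ∂(couplings m) = m b := by
  have h := integral_comp_eval (μ := fun b => gaussianReal (m b) 1) (i := b) (f := id)
    (by fun_prop)
  exact h.trans integral_id_gaussianReal

lemma spin_sq (s : Bool) : spin s * spin s = 1 := by cases s <;> simp [spin]

section
variable {V ι : Type*}

lemma bondSpin_sq (ep : ι → V × V) (S : V → Bool) (b : ι) :
    bondSpin ep S b * bondSpin ep S b = 1 := by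
  unfold bondSpin
  rw [mul_mul_mul_comm, spin_sq, spin_sq, one_mul]

lemma bondSpin_cases (ep : ι → V × V) (S : V → Bool) (b : ι) :
    bondSpin ep S b = 1 ∨ bondSpin ep S b = -1 :=
  mul_self_eq_one_iff.mp (bondSpin_sq ep S b)

lemma bondSpin_abs (ep : ι → V × V) (S : V → Bool) (b : ι) : |bondSpin ep S b| = 1 := by
  rcases bondSpin_cases ep S b with h | h <;> simp [h]

lemma bondSpin_xor (ep : ι → V × V) (S T : V → Bool) (b : ι) :
    bondSpin ep (fun v => xor (S v) (T v)) b = bondSpin ep S b * bondSpin ep T b := by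
  unfold bondSpin
  have h : ∀ s t : Bool, spin (xor s t) = -(spin s * spin t) := by
    intro s t; cases s <;> cases t <;> simp [spin]
  simp only [h]
  ring

variable [Fintype V] [DecidableEq V] [Fintype ι]

lemma Z_pos (ep : ι → V × V) (y j : ι → ℝ) : 0 < partitionFn ep y j :=
  Finset.sum_pos (fun _ _ => Real.exp_pos _) Finset.univ_nonempty

lemma Z_gauge (ep : ι → V × V) (y j : ι → ℝ) (S : V → Bool) (d : ι → ℝ)
    (hd : ∀ b, y b * d b = 0) :
    partitionFn ep y (fun b => bondSpin ep S b * j b + d b) = partitionFn ep y j := by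
  unfold partitionFn
  have hinv : Function.Involutive (fun T : V → Bool => fun v => xor (S v) (T v)) := by
    intro T; funext v; simp
  refine Fintype.sum_equiv (Function.Involutive.toPerm _ hinv) _ _ fun T => ?_
  congr 1
  unfold potential
  refine Finset.sum_congr rfl fun b _ => ?_
  have : Function.Involutive.toPerm _ hinv T = fun v => xor (S v) (T v) := rfl
  rw [this, bondSpin_xor, mul_add, hd]
  ring

lemma map_couplings (m y σ : ι → ℝ) (hσ : ∀ b, σ b = 1 ∨ σ b = -1) :
    Measure.map (fun j b => σ b * j b + (y b - σ b * m b)) (couplings m) = couplings y := by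
  unfold couplings
  have h1 : ∀ b, Measure.map (fun t => σ b * t + (y b - σ b * m b)) (gaussianReal (m b) 1)
      = gaussianReal (y b) 1 := by
    intro b
    have : (fun t => σ b * t + (y b - σ b * m b)) =
      (fun t => t + (y b - σ b * m b)) ∘ (fun t => σ b * t) := rfl
    rw [this, ← Measure.map_map (by fun_prop) (by fun_prop), gaussianReal_map_const_mul,
      gaussianReal_map_add_const]
    congr 1
    · ring
    · ext
      rcases hσ b with h | h <;> simp [h]
  have := Measure.pi_map_pi (μ := fun b => gaussianReal (m b) 1)
    (f := fun b t => σ b * t + (y b - σ b * m b)) (fun b => by fun_prop)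
  rw [this]
  simp_rw [h1]

lemma measurable_logZ (ep : ι → V × V) (y : ι → ℝ) :
    Measurable (fun j => Real.log (partitionFn ep y j)) := by
  unfold partitionFn potential
  fun_prop

lemma pressure_gauge (ep : ι → V × V) (x : ℝ) (y : ι → ℝ) (hy : ∀ b, y b * (y b - x) = 0)
    (S : V → Bool) :
    ∫ j, Real.log (partitionFn ep y j) ∂(couplings fun b => x * bondSpin ep S b)
      = pressure ep y := by
  unfold pressure quenched
  conv_rhs => rw [← map_couplings (fun b => x * bondSpin ep S b) y (bondSpin ep S)
    (bondSpin_cases ep S)]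
  rw [integral_map (Measurable.aemeasurable (measurable_pi_lambda _ fun b =>
    ((measurable_pi_apply b).const_mul _).add_const _)) (measurable_logZ ep y).aestronglyMeasurable]
  congr 1
  ext j
  rw [Z_gauge]
  intro b
  have h := bondSpin_sq ep S b
  have h2 := hy b
  linear_combination h2 - y b * x * h

lemma integrable_logZ (ep : ι → V × V) (y m : ι → ℝ) :
    Integrable (fun j => Real.log (partitionFn ep y j)) (couplings m) := by
  have hU : ∀ j S, |potential ep y j S| ≤ ∑ b, |y b * j b| := by
    intro j S
    refine (Finset.abs_sum_le_sum_abs _ _).trans (Finset.sum_le_sum fun b _ => ?_)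
    rw [abs_mul, bondSpin_abs, mul_one]
  have hint : Integrable (fun j : ι → ℝ => Real.log (Fintype.card (V → Bool)) + ∑ b, |y b * j b|)
      (couplings m) := by
    refine (integrable_const _).add (integrable_finsetSum _ fun b _ => ?_)
    exact ((integrable_coord m b).const_mul (y b)).abs
  refine hint.mono' (measurable_logZ ep y).aestronglyMeasurable (ae_of_all _ fun j => ?_)
  have hc : (1 : ℝ) ≤ Fintype.card (V → Bool) := by
    exact_mod_cast Fintype.card_pos
  have hlc := Real.log_nonneg hc
  rw [Real.norm_eq_abs, abs_le]
  constructor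
  · have S : V → Bool := fun _ => true
    have h1 : Real.exp (potential ep y j S) ≤ partitionFn ep y j :=
      Finset.single_le_sum (f := fun S => Real.exp (potential ep y j S))
        (fun _ _ => (Real.exp_pos _).le) (Finset.mem_univ S)
    have h2 := Real.log_le_log (Real.exp_pos _) h1
    rw [Real.log_exp] at h2
    have h3 := (abs_le.mp (hU j S)).1
    linarith
  · have h1 : partitionFn ep y j ≤ Fintype.card (V → Bool) * Real.exp (∑ b, |y b * j b|) := by
      unfold partitionFn
      refine (Finset.sum_le_card_nsmul _ _ (Real.exp (∑ b, |y b * j b|)) fun S _ => ?_).trans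
        (by simp)
      exact Real.exp_le_exp.mpr (abs_le.mp (hU j S)).2
    have h2 := Real.log_le_log (Z_pos ep y j) h1
    rwa [Real.log_mul (by positivity) (by positivity), Real.log_exp] at h2

lemma potential_eq (ep : ι → V × V) (y j : ι → ℝ) (S : V → Bool) :
    potential ep y j S = ∑ b, (y b * bondSpin ep S b) * j b :=
  Finset.sum_congr rfl fun b _ => by ring

lemma sum_sq_eq (ep : ι → V × V) (y : ι → ℝ) (S : V → Bool) :
    ∑ b, (y b * bondSpin ep S b) ^ 2 / 2 = ∑ b, y b ^ 2 / 2 :=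
  Finset.sum_congr rfl fun b _ => by
    rw [mul_pow, sq (bondSpin ep S b), bondSpin_sq, mul_one]

/-- Integral against the planted measure. -/
lemma integral_planted (ep : ι → V × V) (y : ι → ℝ) (S : V → Bool) (F : (ι → ℝ) → ℝ) :
    ∫ j, Real.exp (potential ep y j S) * F j ∂(couplings (fun _ : ι => 0)) =
      Real.exp (∑ b, y b ^ 2 / 2) * ∫ j, F j ∂(couplings fun b => y b * bondSpin ep S b) := by
  rw [integral_shift (fun b => y b * bondSpin ep S b), sum_sq_eq, ← mul_assoc, ← Real.exp_add, add_neg_cancel, Real.exp_zero,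
    one_mul]
  simp_rw [potential_eq]

lemma integrable_planted (ep : ι → V × V) (y : ι → ℝ) (S : V → Bool) (F : (ι → ℝ) → ℝ)
    (hF : Integrable F (couplings fun b => y b * bondSpin ep S b)) :
    Integrable (fun j => Real.exp (potential ep y j S) * F j) (couplings (fun _ : ι => 0)) := by
  simp_rw [potential_eq]
  exact integrable_shift _ F hF

lemma integrable_Z (ep : ι → V × V) (y : ι → ℝ) :
    Integrable (partitionFn ep y) (couplings (fun _ : ι => 0)) := by
  unfold partitionFn
  refine integrable_finsetSum _ fun S _ => ?_
  simpa using integrable_planted ep y S (fun _ => 1) (integrable_const _)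

lemma integral_Z (ep : ι → V × V) (y : ι → ℝ) :
    ∫ j, partitionFn ep y j ∂(couplings (fun _ : ι => 0)) =
      Fintype.card (V → Bool) * Real.exp (∑ b, y b ^ 2 / 2) := by
  unfold partitionFn
  rw [integral_finsetSum _ fun S _ => by
    simpa using integrable_planted ep y S (fun _ => 1) (integrable_const _)]
  have : ∀ S, ∫ j, Real.exp (potential ep y j S) ∂(couplings (fun _ : ι => 0)) =
      Real.exp (∑ b, y b ^ 2 / 2) := fun S => by
    simpa using integral_planted ep y S (fun _ => 1)
  simp [this]

lemma log_key {t s : ℝ} (ht : 0 < t) (hs : 0 < s) : t - s ≤ t * (Real.log t - Real.log s) := by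
  have h := Real.log_le_sub_one_of_pos (div_pos hs ht)
  rw [Real.log_div hs.ne' ht.ne'] at h
  have h2 := mul_le_mul_of_nonneg_left h ht.le
  have h3 : t * (s / t - 1) = s - t := by field_simp
  rw [h3] at h2
  linarith

end

end Corridor

/-- Surface-order bounds for the corridor term: with all parameters equal
to `x` on the bond set `B`, and `P_{B∖C}` the pressure with the corridor bonds removed
(equivalently `x_b = 0` on `C`),
`(x²/2)|C| ≤ P_B − P_{B∖C} ≤ x²|C|`. -/
theorem corridor_term_surface_bounds
    {V ι : Type*} [Fintype V] [DecidableEq V] [Fintype ι] [DecidableEq ι]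
    (ep : ι → V × V) (hep : ∀ b, (ep b).1 ≠ (ep b).2)
    (x : ℝ) (hx : 0 < x) (C : Finset ι) :
    x ^ 2 / 2 * (C.card : ℝ) ≤
        pressure ep (fun _ => x) - pressure ep (fun b => if b ∈ C then 0 else x) ∧
      pressure ep (fun _ => x) - pressure ep (fun b => if b ∈ C then 0 else x) ≤
        x ^ 2 * (C.card : ℝ) := by
  classical
  set X : ι → ℝ := fun _ => x with hX
  set Y : ι → ℝ := fun b => if b ∈ C then 0 else x with hY
  set γ := couplings (fun _ : ι => (0 : ℝ)) with hγ
  set N : ℝ := (Fintype.card (V → Bool) : ℝ) with hN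
  set D := pressure ep X - pressure ep Y with hD
  set E := Real.exp (∑ b, X b ^ 2 / 2) with hE
  set c : ℝ := x ^ 2 / 2 * (C.card : ℝ) with hc
  have hNpos : 0 < N := by
    have : 0 < Fintype.card (V → Bool) := Fintype.card_pos
    rw [hN]; exact_mod_cast this
  have hEpos : 0 < E := Real.exp_pos _
  let L : (ι → ℝ) → ℝ := fun j =>
    Real.log (partitionFn ep X j) - Real.log (partitionFn ep Y j)
  have hLint : ∀ m, Integrable L (couplings m) := fun m =>
    (Corridor.integrable_logZ ep X m).sub (Corridor.integrable_logZ ep Y m)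
  have hLval : ∀ S, ∫ j, L j ∂(couplings fun b => X b * bondSpin ep S b) = D := by
    intro S
    have := integral_sub (Corridor.integrable_logZ ep X (fun b => X b * bondSpin ep S b))
      (Corridor.integrable_logZ ep Y (fun b => X b * bondSpin ep S b))
    rw [this, hD]
    congr 1
    · exact Corridor.pressure_gauge ep x X (by simp [hX]) S
    · exact Corridor.pressure_gauge ep x Y (fun b => by by_cases h : b ∈ C <;> simp [hY, h]) S
  have hZLint : Integrable (fun j => partitionFn ep X j * L j) γ := by
    have he : (fun j => partitionFn ep X j * L j) =
        fun j => ∑ S, Real.exp (potential ep X j S) * L j := by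
      funext j; exact Finset.sum_mul _ _ _
    rw [he]
    exact integrable_finsetSum _ fun S _ => Corridor.integrable_planted ep X S L (hLint _)
  have hZL : ∫ j, partitionFn ep X j * L j ∂γ = N * (E * D) := by
    have he : (fun j => partitionFn ep X j * L j) =
        fun j => ∑ S, Real.exp (potential ep X j S) * L j := by
      funext j; exact Finset.sum_mul _ _ _
    rw [he]
    rw [integral_finsetSum _ fun S _ => Corridor.integrable_planted ep X S L (hLint _)]
    have : ∀ S, ∫ j, Real.exp (potential ep X j S) * L j ∂γ = E * D := fun S => by
      rw [hγ, Corridor.integral_planted, hLval]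
    rw [Finset.sum_congr rfl fun S _ => this S, Finset.sum_const, nsmul_eq_mul, Finset.card_univ]

  have hdiff : ∀ S j, potential ep X j S - potential ep Y j S =
      ∑ b ∈ C, x * bondSpin ep S b * j b := by
    intro S j
    unfold potential
    rw [← Finset.sum_sub_distrib, ← Finset.sum_subset (Finset.subset_univ C)]
    · refine Finset.sum_congr rfl fun b hb => ?_
      simp only [hX, hY, if_pos hb]; ring
    · intro b _ hb
      simp only [hX, hY, if_neg hb]; ring
  have hsum : ∑ b, X b ^ 2 / 2 = c + ∑ b, Y b ^ 2 / 2 := by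
    rw [← sub_eq_iff_eq_add, ← Finset.sum_sub_distrib,
      ← Finset.sum_subset (Finset.subset_univ C)]
    · rw [Finset.sum_congr rfl (g := fun _ => x ^ 2 / 2)
        (fun b hb => by simp only [hX, hY, if_pos hb]; ring)]
      rw [Finset.sum_const, nsmul_eq_mul, hc]; ring
    · intro b _ hb
      simp only [hX, hY, if_neg hb]; ring
  constructor
  · have hpt : ∀ j, partitionFn ep X j - Real.exp c * partitionFn ep Y j ≤
        partitionFn ep X j * L j - c * partitionFn ep X j := by
      intro j
      have hZx := Corridor.Z_pos ep X j
      have hZy := Corridor.Z_pos ep Y j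
      have := Corridor.log_key hZx (mul_pos (Real.exp_pos c) hZy)
      rw [Real.log_mul (Real.exp_pos c).ne' hZy.ne', Real.log_exp] at this
      simp only [L]
      linarith
    have iX := Corridor.integrable_Z ep X
    have iY := Corridor.integrable_Z ep Y
    have h := integral_mono (μ := γ) (iX.sub (iY.const_mul (Real.exp c)))
      (hZLint.sub (iX.const_mul c)) hpt
    simp only [Pi.sub_apply] at h
    rw [integral_sub iX (iY.const_mul (Real.exp c)), integral_sub hZLint (iX.const_mul c),
      integral_const_mul, integral_const_mul, hZL, hγ, Corridor.integral_Z,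
      Corridor.integral_Z, ← hE, ← hN] at h
    have hE2 : E = Real.exp c * Real.exp (∑ b, Y b ^ 2 / 2) := by
      rw [hE, hsum, Real.exp_add]
    have h0 : N * E - Real.exp c * (N * Real.exp (∑ b, Y b ^ 2 / 2)) = 0 := by
      rw [hE2]; ring
    rw [h0] at h
    have h1 : 0 ≤ (N * E) * (D - c) := by linarith
    have := nonneg_of_mul_nonneg_right h1 (mul_pos hNpos hEpos)
    linarith
  · have hpt : ∀ j, partitionFn ep X j * L j ≤
        ∑ S, Real.exp (potential ep X j S) * ∑ b ∈ C, x * bondSpin ep S b * j b := by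
      intro j
      have hZx := Corridor.Z_pos ep X j
      have hZy := Corridor.Z_pos ep Y j
      set r := partitionFn ep X j / partitionFn ep Y j with hr
      have hrpos : 0 < r := div_pos hZx hZy
      have hLr : L j = Real.log r := by
        rw [hr, Real.log_div hZx.ne' hZy.ne']
      have hS : ∀ S ∈ (Finset.univ : Finset (V → Bool)),
          Real.exp (potential ep X j S) - Real.exp (potential ep Y j S) * r ≤
          Real.exp (potential ep X j S) * (∑ b ∈ C, x * bondSpin ep S b * j b)
            - Real.exp (potential ep X j S) * L j := by
        intro S _
        have := Corridor.log_key (Real.exp_pos (potential ep X j S))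
          (mul_pos (Real.exp_pos (potential ep Y j S)) hrpos)
        rw [Real.log_mul (Real.exp_pos _).ne' hrpos.ne', Real.log_exp, Real.log_exp] at this
        rw [← hdiff, hLr]
        linarith
      have h := Finset.sum_le_sum hS
      rw [Finset.sum_sub_distrib, Finset.sum_sub_distrib, ← Finset.sum_mul, ← Finset.sum_mul] at h
      change partitionFn ep X j - partitionFn ep Y j * r ≤ _ - partitionFn ep X j * L j at h
      have : partitionFn ep Y j * r = partitionFn ep X j := by
        rw [hr]; field_simp
      linarith
    have iT : ∀ S m, Integrable (fun j : ι → ℝ => ∑ b ∈ C, x * bondSpin ep S b * j b)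
        (couplings m) := fun S m =>
      integrable_finsetSum _ fun b _ => (Corridor.integrable_coord m b).const_mul _
    have iP : ∀ S ∈ (Finset.univ : Finset (V → Bool)), Integrable (fun j =>
        Real.exp (potential ep X j S) * ∑ b ∈ C, x * bondSpin ep S b * j b) γ := fun S _ =>
      Corridor.integrable_planted ep X S _ (iT S _)
    have h := integral_mono (μ := γ) hZLint (integrable_finsetSum _ iP) hpt
    rw [integral_finsetSum _ iP, hZL] at h
    have hv : ∀ S, ∫ j, Real.exp (potential ep X j S) *
        ∑ b ∈ C, x * bondSpin ep S b * j b ∂γ = E * (x ^ 2 * C.card) := by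
      intro S
      rw [hγ, Corridor.integral_planted, integral_finsetSum _ fun b _ =>
        (Corridor.integrable_coord _ b).const_mul _]
      congr 1
      simp_rw [integral_const_mul, Corridor.integral_coord]
      rw [Finset.sum_congr rfl (g := fun _ => x ^ 2)
        (fun b _ => by
          have := Corridor.bondSpin_sq ep S b
          simp only [hX]
          linear_combination x ^ 2 * this)]
      rw [Finset.sum_const, nsmul_eq_mul]; ring
    simp only [hv] at h
    rw [Finset.sum_const, nsmul_eq_mul, Finset.card_univ, ← hN, ← mul_assoc, ← mul_assoc] at h
    exact le_of_mul_le_mul_left h (mul_pos hNpos hEpos)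

end
end
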